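/- If V is a concircular vector field on M^n(C) with concircular factor μ, and μ is constant on M^n(C), then V(p) = 0 for every p ∈ M^n(C) and μ(p) = 0 for every p ∈ M^n(C). (Equivalently: in a space form of nonzero constant curvature, the concircular factor of a nonzero concircular vector field is a nonconstant function.) -/

import Mathlib

/-!
The identity for `D_w V` says that `∇_w V = c w` on the space form, where `c` is the constant value
of `μ`. Hence the curvature satisfies `R(u, v)V = 0`, while in constant curvature `C ≠ 0` it equals
`C (⟨v, V⟩ u - ⟨u, V⟩ v)`. Since `n ≥ 2`, each tangent `u` has a tangent `v` independent of it,
which forces `⟨u, V⟩ = 0`; nondegeneracy of the form then gives `V = 0`, and `c w = D_w V = 0`.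

The curvature identity is obtained from the symmetry of a second derivative in the ambient space.
Let `q x = C⟨x, x⟩` and let `π x = x / √(q x)` be the radial projection onto the space form. The map
`H = V ∘ π - c π` satisfies `D_h H(x) = -C (q x)⁻¹ ⟨h, V (π x)⟩ x` near the space form
(`fderiv_reduced`), because `V (π x)` is orthogonal to `x`. A further derivative at `p` along
tangent vectors gives `D²H(p)(v, u) = -C ⟨u, V p⟩ v - C c ⟨u, v⟩ p`, and symmetry in `u, v` is
exactly `⟨u, V p⟩ v = ⟨v, V p⟩ u` (`curvature_identity`).
-/

/-- The bilinear form ⟨x,y⟩ = ε x₁y₁ + x₂y₂ + ⋯ on ℝ^m. -/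
noncomputable def form (ε : ℝ) {m : ℕ} [NeZero m] (x y : Fin m → ℝ) : ℝ :=
  (ε - 1) * (x 0 * y 0) + ∑ i, x i * y i

/-- The space form M^n(C), C = ε/R². -/
def SpaceForm (ε R : ℝ) (n : ℕ) : Set (Fin (n + 1) → ℝ) :=
  {p | form ε p p = 1 / (ε / R ^ 2) ∧ (ε = -1 → 0 < p 0)}

open Filter Topology

/-! ### The ambient bilinear form -/

section FormAlgebra

variable {m : ℕ} [NeZero m] (ε : ℝ)

lemma form_comm (x y : Fin m → ℝ) : form ε x y = form ε y x := by
  simp only [form, mul_comm]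

lemma form_add_right (x y z : Fin m → ℝ) : form ε x (y + z) = form ε x y + form ε x z := by
  simp only [form, Pi.add_apply, mul_add, Finset.sum_add_distrib]; ring

lemma form_smul_right (a : ℝ) (x y : Fin m → ℝ) : form ε x (a • y) = a * form ε x y := by
  simp only [form, Pi.smul_apply, smul_eq_mul, mul_add, Finset.mul_sum]
  congr 1
  · ring
  · exact Finset.sum_congr rfl fun i _ => by ring

lemma form_sub_right (x y z : Fin m → ℝ) : form ε x (y - z) = form ε x y - form ε x z := by
  simp only [form, Pi.sub_apply, mul_sub, Finset.sum_sub_distrib]; ring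

lemma form_add_left (x y z : Fin m → ℝ) : form ε (x + y) z = form ε x z + form ε y z := by
  rw [form_comm, form_add_right, form_comm ε z x, form_comm ε z y]

lemma form_smul_left (a : ℝ) (x y : Fin m → ℝ) : form ε (a • x) y = a * form ε x y := by
  rw [form_comm, form_smul_right, form_comm]

lemma form_sub_left (x y z : Fin m → ℝ) : form ε (x - y) z = form ε x z - form ε y z := by
  rw [form_comm, form_sub_right, form_comm ε z x, form_comm ε z y]

/-- The linear functional `y ↦ ⟨x, y⟩`. -/
noncomputable def formL (x : Fin m → ℝ) : (Fin m → ℝ) →L[ℝ] ℝ :=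
  LinearMap.toContinuousLinearMap
    { toFun := form ε x
      map_add' := form_add_right ε x
      map_smul' := fun a y => form_smul_right ε a x y }

lemma formL_apply (x y : Fin m → ℝ) : formL ε x y = form ε x y := rfl

lemma contDiff_form_self : ContDiff ℝ (⊤ : ℕ∞) fun x : Fin m → ℝ => form ε x x := by
  unfold form; fun_prop

lemma form_nondegenerate (hε : ε ≠ 0) (y : Fin m → ℝ) (h : ∀ x, form ε x y = 0) : y = 0 := by
  funext i
  have hi := h (Pi.single i 1)
  simp only [form, Pi.single_apply, ite_mul, one_mul, zero_mul, Finset.sum_ite_eq',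
    Finset.mem_univ, if_true] at hi
  by_cases h0 : (0 : Fin m) = i
  · subst h0
    rw [if_pos rfl] at hi
    have : ε * y 0 = 0 := by linarith
    simpa [hε] using this
  · rw [if_neg h0] at hi
    simpa using hi

end FormAlgebra

/-! ### Radial projection onto the space form -/

lemma hasDerivAt_line {m : ℕ} (x h : Fin m → ℝ) (t : ℝ) :
    HasDerivAt (fun t : ℝ => x + t • h) h t := by
  simpa using ((hasDerivAt_id t).smul_const h).const_add x

lemma hasDerivAt_apply_line {m : ℕ} {L : (Fin m → ℝ) → (Fin m → ℝ) →L[ℝ] (Fin m → ℝ)}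
    {D : (Fin m → ℝ) →L[ℝ] (Fin m → ℝ) →L[ℝ] (Fin m → ℝ)} {p : Fin m → ℝ}
    (hL : HasFDerivAt L D p) (u v : Fin m → ℝ) :
    HasDerivAt (fun t : ℝ => L (p + t • v) u) (D v u) 0 := by
  have h : HasDerivAt (fun t : ℝ => L (p + t • v)) (D v) 0 := hL.hasLineDerivAt v
  exact (ContinuousLinearMap.apply ℝ (Fin m → ℝ) u).hasFDerivAt.comp_hasDerivAt 0 h

section Projection

variable {m : ℕ} [NeZero m] (ε C : ℝ)

/-- The radial projection `x ↦ x / √(C⟨x, x⟩)` onto `{C⟨x, x⟩ = 1}`, meaningful where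
`C⟨x, x⟩ > 0`. -/
noncomputable def radial (x : Fin m → ℝ) : Fin m → ℝ :=
  (√(C * form ε x x))⁻¹ • x

lemma contDiffAt_radial {x : Fin m → ℝ} (hx : 0 < C * form ε x x) :
    ContDiffAt ℝ (⊤ : ℕ∞) (radial ε C) x := by
  have h1 : ContDiffAt ℝ (⊤ : ℕ∞) (fun x : Fin m → ℝ => C * form ε x x) x :=
    contDiffAt_const.mul (contDiff_form_self ε).contDiffAt
  exact ((h1.sqrt hx.ne').inv (Real.sqrt_pos.2 hx).ne').smul contDiffAt_id

lemma form_line (x h : Fin m → ℝ) (t : ℝ) :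
    form ε (x + t • h) (x + t • h) = form ε x x + 2 * t * form ε x h + t ^ 2 * form ε h h := by
  simp only [form_add_left, form_add_right, form_smul_left, form_smul_right, form_comm ε h x]
  ring

lemma hasDerivAt_form_line (x h : Fin m → ℝ) :
    HasDerivAt (fun t : ℝ => C * form ε (x + t • h) (x + t • h)) (2 * (C * form ε x h)) 0 := by
  simp only [form_line]
  have h1 : HasDerivAt (fun t : ℝ => form ε x x + 2 * t * form ε x h) (2 * 1 * form ε x h) 0 :=
    (((hasDerivAt_id (0 : ℝ)).const_mul 2).mul_const (form ε x h)).const_add (form ε x x)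
  have h2 : HasDerivAt (fun t : ℝ => t ^ 2 * form ε h h) (2 * 0 * form ε h h) 0 := by
    simpa using (hasDerivAt_pow 2 (0 : ℝ)).mul_const (form ε h h)
  exact ((h1.add h2).const_mul C).congr_deriv (by ring)

lemma fderiv_radial {x : Fin m → ℝ} (hx : 0 < C * form ε x x) (h : Fin m → ℝ) :
    fderiv ℝ (radial ε C) x h =
      (√(C * form ε x x))⁻¹ • h - ((√(C * form ε x x))⁻¹ ^ 3 * (C * form ε x h)) • x := by
  have hd := ((contDiffAt_radial ε C hx).differentiableAt (by simp)).hasFDerivAt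
  have h1 : HasDerivAt (fun t : ℝ => radial ε C (x + t • h)) (fderiv ℝ (radial ε C) x h) 0 :=
    hd.hasLineDerivAt h
  have hq := hasDerivAt_form_line ε C x h
  have hx0 : C * form ε (x + (0 : ℝ) • h) (x + (0 : ℝ) • h) ≠ 0 := by simpa using hx.ne'
  have hs := hq.sqrt hx0
  have hs0 : √(C * form ε (x + (0 : ℝ) • h) (x + (0 : ℝ) • h)) ≠ 0 := by
    simpa using (Real.sqrt_pos.2 hx).ne'
  have h2 := (hs.inv hs0).smul (hasDerivAt_line x h 0)
  have h3 := h1.unique h2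
  rw [h3, sub_eq_add_neg, ← neg_smul]
  simp only [zero_smul, add_zero]
  have hp := (Real.sqrt_pos.2 hx).ne'
  congr 2
  simp only [Pi.inv_apply, zero_smul, add_zero]
  field_simp

end Projection

/-! ### The curvature identity -/

section Curvature

variable {n : ℕ} {ε R : ℝ}

lemma mem_spaceForm (hC : ε / R ^ 2 ≠ 0) {p : Fin (n + 1) → ℝ} :
    p ∈ SpaceForm ε R n ↔ ε / R ^ 2 * form ε p p = 1 ∧ (ε = -1 → 0 < p 0) := by
  change form ε p p = 1 / (ε / R ^ 2) ∧ _ ↔ _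
  rw [eq_div_iff hC, mul_comm]

lemma radial_mem (hC : ε / R ^ 2 ≠ 0) {x : Fin (n + 1) → ℝ}
    (hx : 0 < ε / R ^ 2 * form ε x x) (hx0 : ε = -1 → 0 < x 0) :
    radial ε (ε / R ^ 2) x ∈ SpaceForm ε R n := by
  have hp := Real.sqrt_pos.2 hx
  have hs := Real.sq_sqrt hx.le
  rw [mem_spaceForm hC]
  unfold radial
  refine ⟨?_, fun h => ?_⟩
  · rw [form_smul_left, form_smul_right]
    generalize √(ε / R ^ 2 * form ε x x) = s at *
    have : ε / R ^ 2 * (s⁻¹ * (s⁻¹ * form ε x x)) = s⁻¹ ^ 2 * s ^ 2 := by rw [hs]; ring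
    rw [this]; field_simp
  · exact mul_pos (inv_pos.2 hp) (hx0 h)

lemma radial_self (hC : ε / R ^ 2 ≠ 0) {p : Fin (n + 1) → ℝ} (hp : p ∈ SpaceForm ε R n) :
    radial ε (ε / R ^ 2) p = p := by
  simp [radial, ((mem_spaceForm hC).1 hp).1]

lemma eventually_cone (hC : ε / R ^ 2 ≠ 0) {p : Fin (n + 1) → ℝ} (hp : p ∈ SpaceForm ε R n) :
    ∀ᶠ x in 𝓝 p, 0 < ε / R ^ 2 * form ε x x ∧ (ε = -1 → 0 < x 0) := by
  obtain ⟨h1, h2⟩ := (mem_spaceForm hC).1 hp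
  have hc : Continuous fun x : Fin (n + 1) → ℝ => ε / R ^ 2 * form ε x x :=
    continuous_const.mul (contDiff_form_self ε).continuous
  have hpos : 0 < ε / R ^ 2 * form ε p p := by rw [h1]; exact one_pos
  refine Eventually.and (hc.continuousAt.eventually (lt_mem_nhds hpos)) ?_
  by_cases he : ε = -1
  · filter_upwards [(continuous_apply (0 : Fin (n + 1))).continuousAt.eventually
      (lt_mem_nhds (h2 he))] with x hx _ using hx
  · exact Eventually.of_forall fun x h => absurd h he

variable {V : (Fin (n + 1) → ℝ) → (Fin (n + 1) → ℝ)} {c : ℝ}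

lemma contDiffAt_comp_radial (hV : ContDiff ℝ (⊤ : ℕ∞) V) {x : Fin (n + 1) → ℝ}
    (hx : 0 < ε / R ^ 2 * form ε x x) :
    ContDiffAt ℝ (⊤ : ℕ∞) (fun y => V (radial ε (ε / R ^ 2) y)) x :=
  hV.contDiffAt.comp x (contDiffAt_radial ε _ hx)

lemma contDiffAt_reduced (hV : ContDiff ℝ (⊤ : ℕ∞) V) {x : Fin (n + 1) → ℝ}
    (hx : 0 < ε / R ^ 2 * form ε x x) :
    ContDiffAt ℝ (⊤ : ℕ∞)
      (fun y => V (radial ε (ε / R ^ 2) y) - c • radial ε (ε / R ^ 2) y) x :=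
  (contDiffAt_comp_radial hV hx).sub ((contDiffAt_radial ε _ hx).const_smul c)

/-- Subtracting `c π` from `V ∘ π` removes the term `c w` from the concircular identity; the
remaining derivative is radial. -/
lemma fderiv_reduced (hC : ε / R ^ 2 ≠ 0) (hV : ContDiff ℝ (⊤ : ℕ∞) V)
    (htan : ∀ p ∈ SpaceForm ε R n, form ε (V p) p = 0)
    (hconc : ∀ p ∈ SpaceForm ε R n, ∀ w : Fin (n + 1) → ℝ, form ε w p = 0 →
      fderiv ℝ V p w = c • w - ((ε / R ^ 2) * form ε w (V p)) • p)
    {x : Fin (n + 1) → ℝ} (hx : 0 < ε / R ^ 2 * form ε x x) (hx0 : ε = -1 → 0 < x 0)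
    (h : Fin (n + 1) → ℝ) :
    fderiv ℝ (fun y => V (radial ε (ε / R ^ 2) y) - c • radial ε (ε / R ^ 2) y) x h =
      -(ε / R ^ 2 * (ε / R ^ 2 * form ε x x)⁻¹ * form ε h (V (radial ε (ε / R ^ 2) x))) • x := by
  have hmem := radial_mem hC hx hx0
  have hr := ((contDiffAt_radial ε _ hx).differentiableAt (by simp)).hasFDerivAt
  have hVd := (hV.differentiable (by simp) (radial ε (ε / R ^ 2) x)).hasFDerivAt
  have hd := (hVd.comp x hr).sub (hr.const_smul c)
  have hd' : fderiv ℝ (fun y => V (radial ε (ε / R ^ 2) y) - c • radial ε (ε / R ^ 2) y) x h =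
      fderiv ℝ V (radial ε (ε / R ^ 2) x) (fderiv ℝ (radial ε (ε / R ^ 2)) x h)
        - c • fderiv ℝ (radial ε (ε / R ^ 2)) x h := by
    have := hd.fderiv
    exact congrArg (fun L => L h) this
  rw [hd', fderiv_radial ε _ hx]
  have hp := Real.sqrt_pos.2 hx
  have hs := Real.sq_sqrt hx.le
  -- `V (π x)` is orthogonal to `π x`, hence to its multiple `x`
  have hxV : form ε x (V (radial ε (ε / R ^ 2) x)) = 0 := by
    have := htan _ hmem
    rw [form_comm] at this
    nth_rewrite 1 [radial] at this
    rw [form_smul_left] at this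
    exact (mul_eq_zero.1 this).resolve_left (inv_pos.2 hp).ne'
  have hw : form ε ((√(ε / R ^ 2 * form ε x x))⁻¹ • h -
      ((√(ε / R ^ 2 * form ε x x))⁻¹ ^ 3 * (ε / R ^ 2 * form ε x h)) • x)
        (radial ε (ε / R ^ 2) x) = 0 := by
    unfold radial
    simp only [form_sub_left, form_smul_left, form_smul_right, form_comm ε h x]
    generalize √(ε / R ^ 2 * form ε x x) = s at *
    have : s⁻¹ ^ 3 * (ε / R ^ 2 * form ε x h) * form ε x x
        = s⁻¹ ^ 3 * s ^ 2 * form ε x h := by rw [hs]; ring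
    rw [this]; field_simp; ring
  rw [hconc _ hmem _ hw, form_sub_left, form_smul_left, form_smul_left, hxV]
  generalize hv : form ε h (V (radial ε (ε / R ^ 2) x)) = a
  have : (ε / R ^ 2 * form ε x x)⁻¹ = (√(ε / R ^ 2 * form ε x x))⁻¹ ^ 2 := by
    rw [inv_pow, hs]
  rw [this]
  have hdef : radial ε (ε / R ^ 2) x = (√(ε / R ^ 2 * form ε x x))⁻¹ • x := rfl
  rw [hdef, smul_smul, mul_zero, sub_zero, sub_sub_cancel_left, neg_smul]
  congr 2
  ring

/-- The vanishing of the curvature `R(u, v)V`, for a field with `∇V = c • id`. -/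
lemma curvature_identity (hC : ε / R ^ 2 ≠ 0) (hV : ContDiff ℝ (⊤ : ℕ∞) V)
    (htan : ∀ p ∈ SpaceForm ε R n, form ε (V p) p = 0)
    (hconc : ∀ p ∈ SpaceForm ε R n, ∀ w : Fin (n + 1) → ℝ, form ε w p = 0 →
      fderiv ℝ V p w = c • w - ((ε / R ^ 2) * form ε w (V p)) • p)
    {p : Fin (n + 1) → ℝ} (hp : p ∈ SpaceForm ε R n) {u v : Fin (n + 1) → ℝ}
    (hu : form ε u p = 0) (hv : form ε v p = 0) :
    form ε u (V p) • v = form ε v (V p) • u := by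
  set C := ε / R ^ 2 with hCdef
  set H : (Fin (n + 1) → ℝ) → (Fin (n + 1) → ℝ) := fun y => V (radial ε C y) - c • radial ε C y
    with hH
  have hpp : C * form ε p p = 1 := ((mem_spaceForm hC).1 hp).1
  have hpos : 0 < C * form ε p p := by rw [hpp]; exact one_pos
  have hHs : ContDiffAt ℝ (⊤ : ℕ∞) H p := contDiffAt_reduced hV hpos
  have hH2 : HasFDerivAt (fderiv ℝ H) (fderiv ℝ (fderiv ℝ H) p) p :=
    ((hHs.fderiv_right (m := 1) (by norm_cast)).differentiableAt (by simp)).hasFDerivAt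
  have hev : ∀ᶠ y in 𝓝 p, HasFDerivAt H (fderiv ℝ H y) y := by
    filter_upwards [eventually_cone hC hp] with y hy
    exact ((contDiffAt_reduced hV hy.1).differentiableAt (by simp)).hasFDerivAt
  have hsymm := second_derivative_symmetric_of_eventually hev hH2
  -- differentiate the formula for `D_u H` along `t ↦ p + t v`; to first order `q` is constant there
  have key : ∀ u v : Fin (n + 1) → ℝ, form ε u p = 0 → form ε v p = 0 →
      fderiv ℝ (fderiv ℝ H) p v u = -(C * form ε u (V p)) • v - (C * (c * form ε u v)) • p := by
    intro u v hu hv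
    have hline := hasDerivAt_line p v 0
    have h1 : HasDerivAt (fun t : ℝ => fderiv ℝ H (p + t • v) u)
        (fderiv ℝ (fderiv ℝ H) p v u) 0 :=
      hasDerivAt_apply_line hH2 u v
    have hG : HasDerivAt (fun t : ℝ => form ε u (V (radial ε C (p + t • v))))
        (c * form ε u v) 0 := by
      have hr : HasFDerivAt (radial ε C) (fderiv ℝ (radial ε C) p) (p + (0 : ℝ) • v) := by
        simpa using ((contDiffAt_radial ε C hpos).differentiableAt (by simp)).hasFDerivAt
      have hr1 := hr.comp_hasDerivAt 0 hline
      have hrv : fderiv ℝ (radial ε C) p v = v := by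
        rw [fderiv_radial ε C hpos, form_comm ε p v, hv, hpp]; simp
      rw [hrv] at hr1
      have hVd : HasFDerivAt V (fderiv ℝ V p) ((radial ε C ∘ fun t : ℝ => p + t • v) 0) := by
        have : (radial ε C ∘ fun t : ℝ => p + t • v) 0 = p := by
          simpa using radial_self hC hp
        rw [this]
        exact (hV.differentiable (by simp) p).hasFDerivAt
      have h2 := (formL ε u).hasFDerivAt.comp_hasDerivAt 0 (hVd.comp_hasDerivAt 0 hr1)
      rw [formL_apply, hconc p hp v hv, form_sub_right, form_smul_right, form_smul_right, hu,
        mul_zero, sub_zero] at h2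
      exact h2
    have hq : HasDerivAt (fun t : ℝ => (C * form ε (p + t • v) (p + t • v))⁻¹) 0 0 := by
      have h3 := hasDerivAt_form_line ε C p v
      rw [form_comm ε p v, hv] at h3
      have := h3.fun_inv (by simpa using hpos.ne')
      simpa using this
    have h4 := (((hq.const_mul C).mul hG).neg).smul hline
    have heq : (fun t : ℝ => fderiv ℝ H (p + t • v) u) =ᶠ[𝓝 0] fun t : ℝ =>
        -(C * (C * form ε (p + t • v) (p + t • v))⁻¹ * form ε u (V (radial ε C (p + t • v)))) •
          (p + t • v) := by
      have hc : Tendsto (fun t : ℝ => p + t • v) (𝓝 0) (𝓝 p) := by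
        simpa using hline.continuousAt.tendsto
      filter_upwards [hc.eventually (eventually_cone hC hp)] with t ht
      exact fderiv_reduced hC hV htan hconc ht.1 ht.2 u
    have h5 := (h1.congr_of_eventuallyEq heq.symm).unique h4
    rw [h5]
    have hrad : radial ε C p = p := radial_self hC hp
    simp only [Pi.neg_apply, Pi.mul_apply, zero_smul, add_zero, hpp, hrad]
    simp [sub_eq_add_neg]
  have h := hsymm v u
  rw [key u v hu hv, key v u hv hu, form_comm ε v u] at h
  have hcancel := sub_left_injective h
  simp only [neg_smul, neg_inj, mul_smul] at hcancel
  exact smul_right_injective _ hC hcancel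

/-- In ambient dimension at least three the tangent space is not contained in a line. -/
lemma exists_tangent_not_mem_span (hn : 2 ≤ n) (hC : ε / R ^ 2 ≠ 0) {p : Fin (n + 1) → ℝ}
    (hp : p ∈ SpaceForm ε R n) (u : Fin (n + 1) → ℝ) :
    ∃ v, form ε v p = 0 ∧ v ∉ Submodule.span ℝ {u} := by
  classical
  have hpp := ((mem_spaceForm hC).1 hp).1
  have hne : Submodule.span ℝ ({u, p} : Set (Fin (n + 1) → ℝ)) ≠ ⊤ := by
    intro htop
    have h1 := finrank_span_finset_le_card (R := ℝ) ({u, p} : Finset (Fin (n + 1) → ℝ))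
    have h2 : ({u, p} : Finset (Fin (n + 1) → ℝ)).card ≤ 2 := Finset.card_le_two
    rw [Set.finrank, Finset.coe_insert, Finset.coe_singleton, htop, finrank_top,
      Module.finrank_fin_fun] at h1
    omega
  obtain ⟨z, hz⟩ : ∃ z, z ∉ Submodule.span ℝ ({u, p} : Set (Fin (n + 1) → ℝ)) := by
    by_contra! hall
    exact hne (Submodule.eq_top_iff'.2 hall)
  -- the tangential part of `z`: here `C⟨p, p⟩ = 1`
  refine ⟨z - (ε / R ^ 2 * form ε z p) • p, ?_, fun hmem => hz ?_⟩
  · rw [form_sub_left, form_smul_left]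
    linear_combination (-form ε z p) * hpp
  · have h1 := Submodule.span_mono (R := ℝ) (show ({u} : Set (Fin (n + 1) → ℝ)) ⊆ {u, p} by simp)
      hmem
    have h2 : p ∈ Submodule.span ℝ ({u, p} : Set (Fin (n + 1) → ℝ)) :=
      Submodule.subset_span (by simp)
    have h3 := Submodule.add_mem _ h1 (Submodule.smul_mem _ (ε / R ^ 2 * form ε z p) h2)
    rwa [sub_add_cancel] at h3

end Curvature

/-! ### Vanishing of the field and of its factor -/

/-- If `V` is a concircular vector field on M^n(C) whose concircular factor `μ` is
constant on M^n(C), then `V` and `μ` vanish identically on M^n(C): the concircular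
factor of a nonzero concircular field on a space form of nonzero curvature is nonconstant. -/
theorem concircular_factor_constant_implies_zero
    (n : ℕ) (hn : 2 ≤ n) (ε R : ℝ) (hε : ε = 1 ∨ ε = -1) (hR : 0 < R)
    (V : (Fin (n + 1) → ℝ) → (Fin (n + 1) → ℝ)) (μ : (Fin (n + 1) → ℝ) → ℝ)
    (hV : ContDiff ℝ (⊤ : ℕ∞) V) (hμ : ContDiff ℝ (⊤ : ℕ∞) μ)
    (htan : ∀ p ∈ SpaceForm ε R n, form ε (V p) p = 0)
    (hconc : ∀ p ∈ SpaceForm ε R n, ∀ w : Fin (n + 1) → ℝ, form ε w p = 0 →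
      fderiv ℝ V p w = μ p • w - ((ε / R ^ 2) * form ε w (V p)) • p)
    (hconst : ∀ p ∈ SpaceForm ε R n, ∀ q ∈ SpaceForm ε R n, μ p = μ q) :
    ∀ p ∈ SpaceForm ε R n, V p = 0 ∧ μ p = 0 := by
  intro p₀ hp₀
  have hε0 : ε ≠ 0 := by rcases hε with h | h <;> rw [h] <;> norm_num
  have hC : ε / R ^ 2 ≠ 0 := div_ne_zero hε0 (by positivity)
  have hconc' : ∀ p ∈ SpaceForm ε R n, ∀ w : Fin (n + 1) → ℝ, form ε w p = 0 →
      fderiv ℝ V p w = μ p₀ • w - ((ε / R ^ 2) * form ε w (V p)) • p := by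
    intro p hp w hw
    rw [hconst p₀ hp₀ p hp]
    exact hconc p hp w hw
  have hzero : ∀ p ∈ SpaceForm ε R n, V p = 0 := by
    intro p hp
    have hpp := ((mem_spaceForm hC).1 hp).1
    have htang : ∀ u, form ε u p = 0 → form ε u (V p) = 0 := by
      intro u hu
      obtain ⟨v, hv, hvu⟩ := exists_tangent_not_mem_span hn hC hp u
      by_contra hne
      have hid := curvature_identity hC hV htan hconc' hp hu hv
      refine hvu (Submodule.mem_span_singleton.2
        ⟨(form ε u (V p))⁻¹ * form ε v (V p), ?_⟩)
      rw [mul_smul, ← hid, inv_smul_smul₀ hne]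
    -- `V p` is orthogonal to the tangent space and to `p`, which together span
    refine form_nondegenerate ε hε0 _ fun x => ?_
    have hx := htang (x - (ε / R ^ 2 * form ε x p) • p) (by
      rw [form_sub_left, form_smul_left]
      linear_combination (-form ε x p) * hpp)
    rwa [form_sub_left, form_smul_left, form_comm ε p, htan p hp, mul_zero, sub_zero] at hx
  refine ⟨hzero p₀ hp₀, ?_⟩
  obtain ⟨v, hv, hv0⟩ := exists_tangent_not_mem_span hn hC hp₀ 0
  have hpp := ((mem_spaceForm hC).1 hp₀).1
  have hpos : 0 < ε / R ^ 2 * form ε p₀ p₀ := by rw [hpp]; exact one_pos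
  -- `V ∘ π` vanishes near `p₀`, and its derivative along the tangent vector `v` is `D_v V = μ v`
  have hcomp : HasFDerivAt (fun y => V (radial ε (ε / R ^ 2) y))
      ((fderiv ℝ V p₀).comp (fderiv ℝ (radial ε (ε / R ^ 2)) p₀)) p₀ := by
    have hVd : HasFDerivAt V (fderiv ℝ V p₀) (radial ε (ε / R ^ 2) p₀) := by
      rw [radial_self hC hp₀]
      exact (hV.differentiable (by simp) p₀).hasFDerivAt
    exact hVd.comp p₀ ((contDiffAt_radial ε _ hpos).differentiableAt (by simp)).hasFDerivAt
  have hev : (fun _ : Fin (n + 1) → ℝ => (0 : Fin (n + 1) → ℝ)) =ᶠ[𝓝 p₀]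
      fun y => V (radial ε (ε / R ^ 2) y) := by
    filter_upwards [eventually_cone hC hp₀] with y hy
    exact (hzero _ (radial_mem hC hy.1 hy.2)).symm
  have huniq := (hcomp.congr_of_eventuallyEq hev).unique (hasFDerivAt_const 0 p₀)
  have hval := congrArg (fun L : (Fin (n + 1) → ℝ) →L[ℝ] (Fin (n + 1) → ℝ) => L v) huniq
  have hrv : fderiv ℝ (radial ε (ε / R ^ 2)) p₀ v = v := by
    rw [fderiv_radial ε _ hpos, form_comm ε p₀ v, hv, hpp]; simp
  simp only [ContinuousLinearMap.comp_apply, hrv, zero_apply] at hval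
  have hform0 : form ε v (0 : Fin (n + 1) → ℝ) = 0 := by simp [form]
  rw [hconc p₀ hp₀ v hv, hzero p₀ hp₀, hform0, mul_zero, zero_smul, sub_zero] at hval
  refine (smul_eq_zero.1 hval).resolve_right fun h => hv0 ?_
  rw [h]
  exact Submodule.zero_mem _
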